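/- (Lemma 2, comparison lemma) Let s, ε, γ : [0,∞) → ℝ be functions with s(t) ≥ 0, ε(t) ≥ 0 and γ(t) > 0 for all t, such that s is differentiable, ∫_0^t γ(τ)dτ → ∞ as t → ∞, ε(t) → 0 as t → ∞, and ṡ(t) ≤ −γ(t)s(t) + γ(t)ε(t) for all t ≥ 0. Then s(t) → 0 as t → ∞. -/

import Mathlib

open Filter MeasureTheory

/-!
If `ε ≤ c` from some time on and `c < d`, then wherever `s > d` the differential inequality gives
`s' ≤ -γ (s - c) ≤ -(d - c) γ`. Since `∫ γ = ∞`, `s` cannot stay above `d` forever, and since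
`γ ≥ 0`, it cannot climb above `d` again once it has been below.
-/

open Set

-- The interval integral of a non-integrable function is `0` by convention.
lemma intervalIntegrable_of_frequently_integral_ne_zero {E : Type*} [NormedAddCommGroup E]
    [NormedSpace ℝ E] {μ : Measure ℝ} {f : ℝ → E} {a b c : ℝ}
    (h : ∃ᶠ t in atTop, ∫ x in a..t, f x ∂μ ≠ 0) (hb : a ≤ b) (hc : a ≤ c) :
    IntervalIntegrable f μ b c := by
  obtain ⟨u, hu, hbcu⟩ := (h.and_eventually (eventually_ge_atTop (max b c))).exists
  have hau : IntervalIntegrable f μ a u :=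
    not_imp_comm.1 intervalIntegral.integral_undef hu
  exact hau.mono_set <| uIcc_subset_uIcc
    (mem_uIcc_of_le hb ((le_max_left b c).trans hbcu))
    (mem_uIcc_of_le hc ((le_max_right b c).trans hbcu))

lemma intervalIntegrable_of_tendsto_integral_atTop {μ : Measure ℝ} {f : ℝ → ℝ} {a b c : ℝ}
    (h : Tendsto (fun t => ∫ x in a..t, f x ∂μ) atTop atTop) (hb : a ≤ b) (hc : a ≤ c) :
    IntervalIntegrable f μ b c :=
  intervalIntegrable_of_frequently_integral_ne_zero (h.eventually_ne_atTop 0).frequently hb hc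

lemma tendsto_integral_atTop_of_le {μ : Measure ℝ} {f : ℝ → ℝ} {a b : ℝ} (hab : a ≤ b)
    (h : Tendsto (fun t => ∫ x in a..t, f x ∂μ) atTop atTop) :
    Tendsto (fun t => ∫ x in b..t, f x ∂μ) atTop atTop := by
  refine (tendsto_atTop_add_const_right atTop (-∫ x in a..b, f x ∂μ) h).congr' ?_
  filter_upwards [eventually_ge_atTop a] with t hat
  rw [← sub_eq_add_neg]
  exact intervalIntegral.integral_interval_sub_left
    (intervalIntegrable_of_tendsto_integral_atTop h le_rfl hat)
    (intervalIntegrable_of_tendsto_integral_atTop h le_rfl hab)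

lemma image_le_const_of_deriv_right_nonpos_of_lt {f f' : ℝ → ℝ} {a b d : ℝ}
    (hf : ContinuousOn f (Icc a b))
    (hf' : ∀ x ∈ Ico a b, HasDerivWithinAt f (f' x) (Ici x) x)
    (ha : f a ≤ d) (bound : ∀ x ∈ Ico a b, d < f x → f' x ≤ 0) {x : ℝ} (hx : x ∈ Icc a b) :
    f x ≤ d := by
  -- The barrier has positive slope and lies strictly above `d`, so `f` cannot cross it.
  have below_barrier : ∀ r > 0, f x ≤ d + r * (1 + (x - a)) := by
    intro r hr
    refine image_le_of_deriv_right_lt_deriv_boundary (B := fun y => d + r * (1 + (y - a)))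
      (B' := fun _ => r) hf hf' ?_ (fun y => ?_) (fun y hy hfy => ?_) hx
    · linarith
    · simpa only [id, mul_one] using
        ((((hasDerivAt_id y).sub_const a).const_add 1).const_mul r).const_add d
    · have hdy : d < f y := by
        rw [hfy]
        have : 0 ≤ y - a := sub_nonneg.2 hy.1
        exact lt_add_of_pos_right d (by positivity)
      exact (bound y hy hdy).trans_lt hr
  have hpos : 0 < 1 + (x - a) := by linarith [hx.1]
  refine le_of_forall_pos_le_add fun η hη => ?_
  simpa only [div_mul_cancel₀ η hpos.ne'] using below_barrier (η / (1 + (x - a))) (by positivity)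

section DerivRightLeNeg

variable {f f' φ : ℝ → ℝ} {a d : ℝ}

lemma exists_le_of_deriv_right_le_neg (hf : ContinuousOn f (Ici a))
    (hf' : ∀ x ≥ a, HasDerivWithinAt f (f' x) (Ici x) x)
    (hφ : Tendsto (fun t => ∫ x in a..t, φ x) atTop atTop)
    (bound : ∀ x ≥ a, d < f x → f' x ≤ -φ x) :
    ∃ t ≥ a, f t ≤ d := by
  by_contra! hlt
  obtain ⟨t, hφt, hat⟩ :=
    ((hφ.eventually_ge_atTop (f a - d)).and (eventually_ge_atTop a)).exists
  have hφint : IntegrableOn φ (Icc a t) :=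
    (intervalIntegrable_iff_integrableOn_Icc_of_le hat).1
      (intervalIntegrable_of_tendsto_integral_atTop hφ le_rfl hat)
  have hdecrease : f t - f a ≤ ∫ x in a..t, -φ x :=
    intervalIntegral.sub_le_integral_of_hasDeriv_right_of_le hat (hf.mono Icc_subset_Ici_self)
      (fun x hx => (hf' x hx.1.le).mono Ioi_subset_Ici_self) hφint.neg
      (fun x hx => bound x hx.1.le (hlt x hx.1.le))
  rw [intervalIntegral.integral_neg] at hdecrease
  linarith [hlt t hat]

lemma eventually_le_of_deriv_right_le_neg (hf : ContinuousOn f (Ici a))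
    (hf' : ∀ x ≥ a, HasDerivWithinAt f (f' x) (Ici x) x)
    (hφ : Tendsto (fun t => ∫ x in a..t, φ x) atTop atTop) (hφ_nonneg : ∀ x ≥ a, 0 ≤ φ x)
    (bound : ∀ x ≥ a, d < f x → f' x ≤ -φ x) :
    ∀ᶠ t in atTop, f t ≤ d := by
  obtain ⟨u, hau, hu⟩ := exists_le_of_deriv_right_le_neg hf hf' hφ bound
  filter_upwards [eventually_ge_atTop u] with t hut
  refine image_le_const_of_deriv_right_nonpos_of_lt
    (hf.mono (Icc_subset_Ici_self.trans (Ici_subset_Ici.2 hau)))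
    (fun x hx => hf' x (hau.trans hx.1)) hu (fun x hx hdx => ?_) (right_mem_Icc.2 hut)
  have hax : a ≤ x := hau.trans hx.1
  exact (bound x hax hdx).trans (neg_nonpos.2 (hφ_nonneg x hax))

end DerivRightLeNeg

-- `limsup s ≤ limsup ε`, spelled out because `limsup` takes junk values on unbounded functions.
theorem lemma2_comparison_general {s ε γ s' : ℝ → ℝ} {L : ℝ}
    (hγ : ∀ t ≥ (0 : ℝ), 0 ≤ γ t)
    (hcont : ContinuousOn s (Ici 0))
    (hderiv : ∀ t ≥ (0 : ℝ), HasDerivWithinAt s (s' t) (Ici t) t)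
    (hγdiv : Tendsto (fun t => ∫ τ in (0 : ℝ)..t, γ τ) atTop atTop)
    (hε : ∀ b > L, ∀ᶠ t in atTop, ε t < b)
    (hineq : ∀ t ≥ (0 : ℝ), s' t ≤ -γ t * s t + γ t * ε t) :
    ∀ b > L, ∀ᶠ t in atTop, s t < b := by
  intro b hb
  obtain ⟨c, hLc, hcb⟩ := exists_between hb
  obtain ⟨d, hcd, hdb⟩ := exists_between hcb
  obtain ⟨T, hT, hεT⟩ := (atTop_basis' 0).eventually_iff.1 (hε c hLc)
  have hdiv : Tendsto (fun t => ∫ τ in T..t, (d - c) * γ τ) atTop atTop := by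
    simpa only [intervalIntegral.integral_const_mul] using
      (tendsto_integral_atTop_of_le hT hγdiv).const_mul_atTop (sub_pos.2 hcd)
  have hdecay : ∀ t ≥ T, d < s t → s' t ≤ -((d - c) * γ t) := by
    intro t ht hdt
    calc s' t ≤ -γ t * s t + γ t * ε t := hineq t (hT.trans ht)
      _ = -((s t - ε t) * γ t) := by ring
      _ ≤ -((d - c) * γ t) :=
        neg_le_neg <| mul_le_mul_of_nonneg_right (sub_le_sub hdt.le (hεT ht).le)
          (hγ t (hT.trans ht))
  have hle : ∀ᶠ t in atTop, s t ≤ d :=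
    eventually_le_of_deriv_right_le_neg (hcont.mono (Ici_subset_Ici.2 hT))
      (fun t ht => hderiv t (hT.trans ht)) hdiv
      (fun t ht => mul_nonneg (sub_nonneg.2 hcd.le) (hγ t (hT.trans ht))) hdecay
  exact hle.mono fun t ht => ht.trans_lt hdb

/-- Lemma 2 (comparison lemma): if `s t ≥ 0`, `ε t ≥ 0`, `γ t > 0` for all
`t ≥ 0`, `s` is differentiable with derivative `s'`, `∫_0^t γ → ∞`, `ε t → 0`,
and `s' t ≤ -γ t * s t + γ t * ε t` for all `t ≥ 0`, then `s t → 0`. -/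
theorem lemma2_comparison
    (s ε γ s' : ℝ → ℝ)
    (hs : ∀ t ≥ (0:ℝ), 0 ≤ s t)
    (hε : ∀ t ≥ (0:ℝ), 0 ≤ ε t)
    (hγ : ∀ t ≥ (0:ℝ), 0 < γ t)
    (hderiv : ∀ t ≥ (0:ℝ), HasDerivAt s (s' t) t)
    (hγdiv : Tendsto (fun t => ∫ τ in (0:ℝ)..t, γ τ) atTop atTop)
    (hεlim : Tendsto ε atTop (nhds 0))
    (hineq : ∀ t ≥ (0:ℝ), s' t ≤ -γ t * s t + γ t * ε t) :
    Tendsto s atTop (nhds 0) := by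
  exact tendsto_order.2 ⟨fun b hb => (eventually_ge_atTop 0).mono fun t ht => hb.trans_le (hs t ht),
    lemma2_comparison_general (fun t ht => (hγ t ht).le) (HasDerivAt.continuousOn hderiv)
      (fun t ht => (hderiv t ht).hasDerivWithinAt) hγdiv (tendsto_order.1 hεlim).2 hineq⟩
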